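/- Let ρ₀, ρ∞, μ be positive real constants and define ρ(t) = ρ₀·exp(−μt) + ρ∞. Let σ : ℝ → ℝ be differentiable on [0, ∞) with |σ(0)| < ρ(0). Let F, g : ℝ → ℝ satisfy |F(t)| ≤ M for some constant M ≥ 0 and g(t) ≥ g̲ for some constant g̲ > 0, for all t ≥ 0. Assume that for every t ≥ 0 with |σ(t)| < ρ(t), the derivative satisfies σ'(t) = F(t) − g(t)·tan(π·σ(t)/(2·ρ(t))). Then |σ(t)| < ρ(t) for all t ≥ 0. -/

import Mathlib

open Real

/-!
If the bound failed, there would be a first time `T > 0` at which `|σ| = ρ`; replacing `(σ, F)` by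
`(-σ, -F)` if necessary, `σ T = ρ T`. As `t` increases to `T`, the angle `π σ / (2 ρ)` tends to
`π / 2` from below, so the tangent blows up while `F` stays bounded and `g` stays away from `0`.
Hence `σ' t → -∞`, which contradicts the differentiability of `σ` at `T` from the left.
-/

open Filter Set Topology

lemma exists_first_eq_of_lt_of_le {α β : Type*} [ConditionallyCompleteLinearOrder α]
    [TopologicalSpace α] [OrderTopology α] [DenselyOrdered α] [LinearOrder β] [TopologicalSpace β]
    [OrderClosedTopology β] {f h : α → β} {a b : α} (hab : a ≤ b) (hf : ContinuousOn f (Icc a b))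
    (hh : ContinuousOn h (Icc a b)) (ha : f a < h a) (hb : h b ≤ f b) :
    ∃ T ∈ Ioc a b, f T = h T ∧ ∀ t ∈ Ico a T, f t < h t := by
  have exists_eq : ∀ c ∈ Icc a b, h c ≤ f c → ∃ t ∈ Icc a c, f t = h t := fun c hc hle =>
    isPreconnected_Icc.intermediate_value₂ (left_mem_Icc.2 hc.1) (right_mem_Icc.2 hc.1)
      (hf.mono (Icc_subset_Icc_right hc.2)) (hh.mono (Icc_subset_Icc_right hc.2)) ha.le hle
  have isCompact_eq : IsCompact {t ∈ Icc a b | f t = h t} := by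
    have isClosed_le := isClosed_Icc.isClosed_le hf hh
    have isClosed_ge := isClosed_Icc.isClosed_le hh hf
    refine isCompact_Icc.of_isClosed_subset ?_ (sep_subset _ _)
    simpa only [le_antisymm_iff, sep_and] using isClosed_le.inter isClosed_ge
  obtain ⟨T, ⟨hT, hfT⟩, hmin⟩ := isCompact_eq.exists_isLeast (exists_eq b (right_mem_Icc.2 hab) hb)
  have hne : a ≠ T := by
    rintro rfl
    exact ha.ne hfT
  refine ⟨T, ⟨hT.1.lt_of_ne hne, hT.2⟩, hfT, fun t ht => ?_⟩
  by_contra! hle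
  obtain ⟨s, hs, hfs⟩ := exists_eq t ⟨ht.1, ht.2.le.trans hT.2⟩ hle
  have hsT : s < T := hs.2.trans_lt ht.2
  exact hsT.not_ge (hmin ⟨⟨hs.1, hsT.le.trans hT.2⟩, hfs⟩)

section Filter

variable {α : Type*} {l : Filter α}

lemma tendsto_pi_mul_div_two_mul_nhdsLT {σ ρ : α → ℝ} {r : ℝ} (hr : 0 < r)
    (hσ : Tendsto σ l (𝓝 r)) (hρ : Tendsto ρ l (𝓝 r)) (hlt : ∀ᶠ x in l, σ x < ρ x) :
    Tendsto (fun x => π * σ x / (2 * ρ x)) l (𝓝[<] (π / 2)) := by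
  refine tendsto_nhdsWithin_iff.2 ⟨?_, ?_⟩
  · have hdiv := (hσ.const_mul π).div (hρ.const_mul 2) (by positivity)
    rwa [mul_div_mul_right _ _ hr.ne'] at hdiv
  · filter_upwards [hlt, hρ.eventually_const_lt hr] with x hx hρx
    calc π * σ x / (2 * ρ x) < π * ρ x / (2 * ρ x) := by gcongr
      _ = π / 2 := mul_div_mul_right _ _ hρx.ne'

lemma tendsto_sub_mul_tan_atBot {F g θ : α → ℝ} {M c : ℝ} (hF : ∀ᶠ x in l, F x ≤ M) (hc : 0 < c)
    (hg : ∀ᶠ x in l, c ≤ g x) (hθ : Tendsto θ l (𝓝[<] (π / 2))) :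
    Tendsto (fun x => F x - g x * tan (θ x)) l atBot := by
  have htan : Tendsto (fun x => tan (θ x)) l atTop := tendsto_tan_pi_div_two.comp hθ
  have hgtan : Tendsto (fun x => g x * tan (θ x)) l atTop := by
    refine tendsto_atTop_mono' l ?_ (htan.const_mul_atTop hc)
    filter_upwards [hg, htan.eventually_ge_atTop 0] with x hgx htanx
    gcongr
  simpa only [sub_eq_add_neg, Function.comp_def] using
    tendsto_atBot_add_left_of_ge' l M hF (tendsto_neg_atTop_atBot.comp hgtan)

end Filter

section Contact

variable {σ ρ F g : ℝ → ℝ} {T M c : ℝ}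

lemma ne_of_deriv_eq_sub_mul_tan (hσ : DifferentiableWithinAt ℝ σ (Iio T) T)
    (hρ : ContinuousWithinAt ρ (Iio T) T) (hρT : 0 < ρ T) (hF : ∀ᶠ t in 𝓝[<] T, F t ≤ M)
    (hc : 0 < c) (hg : ∀ᶠ t in 𝓝[<] T, c ≤ g t) (hlt : ∀ᶠ t in 𝓝[<] T, σ t < ρ t)
    (hode : ∀ᶠ t in 𝓝[<] T, deriv σ t = F t - g t * tan (π * σ t / (2 * ρ t))) :
    σ T ≠ ρ T := by
  intro heq
  have hangle : Tendsto (fun t => π * σ t / (2 * ρ t)) (𝓝[<] T) (𝓝[<] (π / 2)) :=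
    tendsto_pi_mul_div_two_mul_nhdsLT hρT (heq ▸ hσ.continuousWithinAt.tendsto) hρ.tendsto hlt
  have hderiv : Tendsto (deriv σ) (𝓝[<] T) atBot :=
    (tendsto_sub_mul_tan_atBot hF hc hg hangle).congr' (hode.mono fun _ => Eq.symm)
  exact not_differentiableWithinAt_of_deriv_tendsto_atBot_Iio σ hderiv hσ

lemma abs_ne_of_deriv_eq_sub_mul_tan (hσ : DifferentiableWithinAt ℝ σ (Iio T) T)
    (hρ : ContinuousWithinAt ρ (Iio T) T) (hρT : 0 < ρ T) (hF : ∀ᶠ t in 𝓝[<] T, |F t| ≤ M)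
    (hc : 0 < c) (hg : ∀ᶠ t in 𝓝[<] T, c ≤ g t) (hlt : ∀ᶠ t in 𝓝[<] T, |σ t| < ρ t)
    (hode : ∀ᶠ t in 𝓝[<] T, deriv σ t = F t - g t * tan (π * σ t / (2 * ρ t))) :
    |σ T| ≠ ρ T := by
  intro heq
  rcases eq_or_eq_neg_of_abs_eq heq with hupper | hlower
  · exact ne_of_deriv_eq_sub_mul_tan hσ hρ hρT (hF.mono fun t ht => (le_abs_self _).trans ht)
      hc hg (hlt.mono fun t ht => (le_abs_self _).trans_lt ht) hode hupper
  · have hode_neg : ∀ᶠ t in 𝓝[<] T,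
        deriv (-σ) t = (-F) t - g t * tan (π * (-σ) t / (2 * ρ t)) := by
      filter_upwards [hode] with t ht
      simp only [deriv.neg, ht, Pi.neg_apply, mul_neg, neg_div, tan_neg]
      ring
    exact ne_of_deriv_eq_sub_mul_tan hσ.neg hρ hρT
      (hF.mono fun t ht => (neg_le_abs _).trans ht) hc hg
      (hlt.mono fun t ht => (neg_le_abs _).trans_lt ht) hode_neg (neg_eq_iff_eq_neg.2 hlower)

end Contact

theorem reaching_law_general {ρ σ F g : ℝ → ℝ} (hρ : ContinuousOn ρ (Ici 0))
    (hρpos : ∀ t > 0, 0 < ρ t) (hσ : DifferentiableOn ℝ σ (Ici 0))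
    (hF : ∀ T > 0, ∃ M, ∀ t ∈ Ioo 0 T, |F t| ≤ M)
    (hg : ∀ T > 0, ∃ c > 0, ∀ t ∈ Ioo 0 T, c ≤ g t) (h0 : |σ 0| < ρ 0)
    (hode : ∀ t > 0, |σ t| < ρ t → deriv σ t = F t - g t * tan (π * σ t / (2 * ρ t))) :
    ∀ t ≥ 0, |σ t| < ρ t := by
  intro b hb
  by_contra! hexit
  obtain ⟨T, ⟨hT, -⟩, heq, hlt⟩ := exists_first_eq_of_lt_of_le hb
    (hσ.continuousOn.abs.mono Icc_subset_Ici_self) (hρ.mono Icc_subset_Ici_self) h0 hexit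
  obtain ⟨M, hM⟩ := hF T hT
  obtain ⟨c, hc, hgc⟩ := hg T hT
  have hleft : ∀ᶠ t in 𝓝[<] T, t ∈ Ioo 0 T := Ioo_mem_nhdsLT hT
  have hin : ∀ t ∈ Ioo 0 T, |σ t| < ρ t := fun t ht => hlt t (Ioo_subset_Ico_self ht)
  have hnhds : Ici 0 ∈ 𝓝 T := Ici_mem_nhds hT
  exact abs_ne_of_deriv_eq_sub_mul_tan (hσ.differentiableAt hnhds).differentiableWithinAt
    (hρ.continuousAt hnhds).continuousWithinAt (hρpos T hT) (hleft.mono hM) hc (hleft.mono hgc)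
    (hleft.mono hin) (hleft.mono fun t ht => hode t ht.1 (hin t ht)) heq

/-- Abstract form of the reaching-law part of Theorem 1: if along trajectories
`σ' = F - g · tan(π σ / (2 ρ))` with `F` bounded, `g` bounded below by a
positive constant, `ρ(t) = ρ₀ exp(-μ t) + ρInf`, and `|σ(0)| < ρ(0)`, then
`|σ(t)| < ρ(t)` for all `t ≥ 0`. -/
theorem reaching_law
    (ρ₀ ρInf μ : ℝ) (hρ₀ : 0 < ρ₀) (hρInf : 0 < ρInf) (hμ : 0 < μ)
    (σ F g : ℝ → ℝ)
    (hσdiff : ∀ t ∈ Set.Ici (0 : ℝ), DifferentiableAt ℝ σ t)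
    (M : ℝ) (hM : 0 ≤ M) (hF : ∀ t ≥ (0 : ℝ), |F t| ≤ M)
    (glow : ℝ) (hglow : 0 < glow) (hg : ∀ t ≥ (0 : ℝ), glow ≤ g t)
    (h0 : |σ 0| < ρ₀ * Real.exp (-μ * 0) + ρInf)
    (hode : ∀ t ≥ (0 : ℝ), |σ t| < ρ₀ * Real.exp (-μ * t) + ρInf →
      deriv σ t = F t - g t * Real.tan (π * σ t / (2 * (ρ₀ * Real.exp (-μ * t) + ρInf)))) :
    ∀ t ≥ (0 : ℝ), |σ t| < ρ₀ * Real.exp (-μ * t) + ρInf :=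
  reaching_law_general (ρ := fun t => ρ₀ * Real.exp (-μ * t) + ρInf) (by fun_prop)
    (fun t _ => by positivity) (fun t ht => (hσdiff t ht).differentiableWithinAt)
    (fun _ _ => ⟨M, fun t ht => hF t ht.1.le⟩)
    (fun _ _ => ⟨glow, hglow, fun t ht => hg t ht.1.le⟩) h0 (fun t ht => hode t ht.le)
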